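/- arXiv:2205.09516 — 2 statements merged into one kernel-verified Lean document; each statement's English description precedes it below -/
import Mathlib

section
/- For every α ∈ (0,1), (1/π)·∫₀^∞ arctan( sin((1−α)π/2) / ( u^{3−α} + cos((1−α)π/2) ) ) du = sin( (π/(3−α))·((1−α)/2) ) / sin( π/(3−α) ). -/
open Real Set

/-!
Writing `z = exp (φ i)`, the integrand is `arg (u ^ p + z)`, the imaginary part of
`log (u ^ p + z)`. Since `u · d/du log (u ^ p + z) = p - p z / (u ^ p + z)`, integrating by parts
reduces the claim to the Stieltjes-type integral `∫ (u ^ p + z)⁻¹ = C z ^ (1 / p - 1)` with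
`C = (π / p) / sin (π / p)`. For `z > 0` this follows by writing the integrand as a Laplace
transform, swapping the integrals and using Euler's reflection formula; both sides being
holomorphic on the slit plane, the identity theorem gives it for every other `z`.
-/

open MeasureTheory Filter Topology
open Complex (slitPlane)

section SlitPlane

-- Rotation by `-arg z / 2` gives the positive axis and the ray of `z` opposite arguments.
lemma add_norm_mul_cos_half_arg_le_norm_ofReal_add (x : ℝ) (z : ℂ) :
    (x + ‖z‖) * cos (z.arg / 2) ≤ ‖(x : ℂ) + z‖ := by
  set e : ℂ := Complex.exp ((-(z.arg / 2) : ℝ) * Complex.I) with he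
  have he_re : e.re = cos (z.arg / 2) := by
    rw [he, Complex.exp_ofReal_mul_I_re, cos_neg]
  have hze : z * e = ‖z‖ * Complex.exp ((z.arg / 2 : ℝ) * Complex.I) := by
    nth_rewrite 1 [← Complex.norm_mul_exp_arg_mul_I z]
    rw [mul_assoc, he, ← Complex.exp_add]
    congr 2
    push_cast
    ring
  calc (x + ‖z‖) * cos (z.arg / 2) = (((x : ℂ) + z) * e).re := by
        rw [add_mul, add_mul, hze, Complex.add_re, Complex.re_ofReal_mul, Complex.re_ofReal_mul,
          he_re, Complex.exp_ofReal_mul_I_re]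
    _ ≤ ‖((x : ℂ) + z) * e‖ := Complex.re_le_norm _
    _ = ‖(x : ℂ) + z‖ := by rw [norm_mul, he, Complex.norm_exp_ofReal_mul_I, mul_one]

lemma cos_half_arg_pos {z : ℂ} (hz : z ∈ slitPlane) : 0 < cos (z.arg / 2) := by
  have h_lt : z.arg < π := (Complex.arg_le_pi z).lt_of_ne (Complex.mem_slitPlane_iff_arg.mp hz).1
  exact cos_pos_of_mem_Ioo ⟨by linarith [Complex.neg_pi_lt_arg z], by linarith⟩

lemma exists_ball_mul_add_one_le_norm_ofReal_add {z : ℂ} (hz : z ∈ slitPlane) :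
    ∃ c > 0, ∀ w ∈ Metric.ball z c, ∀ x : ℝ, 0 ≤ x → c * (x + 1) ≤ ‖(x : ℂ) + w‖ := by
  set k := cos (z.arg / 2)
  have hk : 0 < k := cos_half_arg_pos hz
  have hz_norm : 0 < ‖z‖ := norm_pos_iff.mpr (Complex.slitPlane_ne_zero hz)
  set c := min k (k * ‖z‖ / 2)
  have hck : c ≤ k := min_le_left ..
  have hcz : c ≤ k * ‖z‖ / 2 := min_le_right ..
  refine ⟨c, lt_min hk (by positivity), fun w hw x hx ↦ ?_⟩
  have hzw : ‖z - w‖ < c := by rwa [← dist_eq_norm, dist_comm]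
  calc c * (x + 1) = c * x + 2 * c - c := by ring
    _ ≤ k * x + 2 * (k * ‖z‖ / 2) - ‖z - w‖ := by gcongr
    _ = (x + ‖z‖) * k - ‖z - w‖ := by ring
    _ ≤ ‖(x : ℂ) + z‖ - ‖z - w‖ := by
        gcongr
        exact add_norm_mul_cos_half_arg_le_norm_ofReal_add x z
    _ ≤ ‖(x : ℂ) + z - (z - w)‖ := norm_sub_norm_le _ _
    _ = ‖(x : ℂ) + w‖ := by congr 1; ring

lemma exists_norm_inv_ofReal_add_le {z : ℂ} (hz : z ∈ slitPlane) :
    ∃ C δ : ℝ, 0 < C ∧ 0 < δ ∧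
      ∀ w ∈ Metric.ball z δ, ∀ x : ℝ, 0 ≤ x → ‖((x : ℂ) + w)⁻¹‖ ≤ C * (x + 1)⁻¹ := by
  obtain ⟨c, hc, hle⟩ := exists_ball_mul_add_one_le_norm_ofReal_add hz
  refine ⟨c⁻¹, c, inv_pos.mpr hc, hc, fun w hw x hx ↦ ?_⟩
  rw [norm_inv, ← mul_inv]
  exact inv_anti₀ (by positivity) (hle w hw x hx)

lemma ofReal_add_mem_slitPlane {x : ℝ} (hx : 0 ≤ x) {z : ℂ} (hz : z ∈ slitPlane) :
    (x : ℂ) + z ∈ slitPlane := by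
  rw [Complex.mem_slitPlane_iff, Complex.add_re, Complex.add_im, Complex.ofReal_re,
    Complex.ofReal_im, zero_add]
  exact hz.imp_left (add_pos_of_nonneg_of_pos hx)

lemma abs_arg_ofReal_add_le {x : ℝ} (hx : 0 ≤ x) (z : ℂ) :
    |((x : ℂ) + z).arg| ≤ π * ‖z‖ * ‖((x : ℂ) + z)⁻¹‖ := by
  set w : ℂ := x + z
  have hw_re : w.re = x + z.re := by simp [w]
  have hw_im : w.im = z.im := by simp [w]
  obtain hw0 | hw0 := eq_or_ne w 0
  · simp [hw0]
  have hw_norm : 0 < ‖w‖ := norm_pos_iff.mpr hw0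
  rw [norm_inv, ← div_eq_mul_inv, le_div_iff₀ hw_norm]
  obtain hre | hre := le_total 0 w.re
  · have h_jordan : 2 / π * |w.arg| ≤ |w.im| / ‖w‖ := by
      simpa [Complex.sin_arg, abs_div] using
        mul_abs_le_abs_sin (Complex.abs_arg_le_pi_div_two_iff.mpr hre)
    calc |w.arg| * ‖w‖ = π / 2 * (2 / π * |w.arg| * ‖w‖) := by field_simp
      _ ≤ π / 2 * |w.im| := by
          gcongr
          exact (le_div_iff₀ hw_norm).mp h_jordan
      _ ≤ π * ‖z‖ := by
          gcongr
          · exact half_le_self pi_pos.le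
          · exact hw_im ▸ Complex.abs_im_le_norm z
  · have hw_le : ‖w‖ ≤ ‖z‖ := by
      rw [← sq_le_sq₀ hw_norm.le (norm_nonneg z), Complex.sq_norm, Complex.sq_norm,
        Complex.normSq_apply, Complex.normSq_apply, hw_im]
      nlinarith
    exact mul_le_mul (Complex.abs_arg_le_pi w) hw_le hw_norm.le pi_pos.le

lemma arg_eq_arctan_im_div_re {z : ℂ} (hz : 0 < z.re) : z.arg = arctan (z.im / z.re) := by
  obtain ⟨h_gt, h_lt⟩ := abs_lt.mp (Complex.abs_arg_lt_pi_div_two_iff.mpr (Or.inl hz))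
  rw [← Complex.tan_arg, arctan_tan h_gt h_lt]

end SlitPlane

section IntegralInvAdd

variable {X : Type*} [MeasurableSpace X] {μ : Measure X} {f : X → ℝ}

lemma aestronglyMeasurable_inv_ofReal_add (hf : Integrable (fun x ↦ (f x + 1)⁻¹) μ) (z : ℂ) :
    AEStronglyMeasurable (fun x ↦ ((f x : ℂ) + z)⁻¹) μ := by
  have hfm : AEMeasurable f μ := by simpa using hf.aemeasurable.inv.sub_const 1
  exact (hfm.complex_ofReal.add_const z).inv.aestronglyMeasurable

lemma integrable_inv_ofReal_add (hf₀ : ∀ᵐ x ∂μ, 0 ≤ f x)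
    (hf : Integrable (fun x ↦ (f x + 1)⁻¹) μ) {z : ℂ} (hz : z ∈ slitPlane) :
    Integrable (fun x ↦ ((f x : ℂ) + z)⁻¹) μ := by
  obtain ⟨C, δ, -, hδ, hle⟩ := exists_norm_inv_ofReal_add_le hz
  refine (hf.const_mul C).mono' (aestronglyMeasurable_inv_ofReal_add hf z) ?_
  filter_upwards [hf₀] with x hx
  exact hle z (Metric.mem_ball_self hδ) (f x) hx

lemma differentiableOn_integral_inv_ofReal_add (hf₀ : ∀ᵐ x ∂μ, 0 ≤ f x)
    (hf : Integrable (fun x ↦ (f x + 1)⁻¹) μ) :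
    DifferentiableOn ℂ (fun z : ℂ ↦ ∫ x, ((f x : ℂ) + z)⁻¹ ∂μ) slitPlane := by
  intro z hz
  obtain ⟨C, δ, hC, hδ, hle⟩ := exists_norm_inv_ofReal_add_le hz
  have hball : Metric.ball z δ ∩ slitPlane ∈ 𝓝 z :=
    inter_mem (Metric.ball_mem_nhds z hδ) (Complex.isOpen_slitPlane.mem_nhds hz)
  have hmeas := aestronglyMeasurable_inv_ofReal_add hf
  have hbound : ∀ᵐ x ∂μ, ∀ w ∈ Metric.ball z δ ∩ slitPlane,
      ‖-(((f x : ℂ) + w) ^ 2)⁻¹‖ ≤ C ^ 2 * (f x + 1)⁻¹ := by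
    filter_upwards [hf₀] with x hx w hw
    calc ‖-(((f x : ℂ) + w) ^ 2)⁻¹‖ = ‖((f x : ℂ) + w)⁻¹‖ ^ 2 := by
          rw [norm_neg, ← inv_pow, norm_pow]
      _ ≤ (C * (f x + 1)⁻¹) ^ 2 := by
          gcongr
          exact hle w hw.1 (f x) hx
      _ = C ^ 2 * (f x + 1)⁻¹ * (f x + 1)⁻¹ := by ring
      _ ≤ C ^ 2 * (f x + 1)⁻¹ :=
          mul_le_of_le_one_right (by positivity) (inv_le_one_of_one_le₀ (by linarith))
  have hderiv : ∀ᵐ x ∂μ, ∀ w ∈ Metric.ball z δ ∩ slitPlane,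
      HasDerivAt (fun w ↦ ((f x : ℂ) + w)⁻¹) (-(((f x : ℂ) + w) ^ 2)⁻¹) w := by
    filter_upwards [hf₀] with x hx w hw
    have hne := Complex.slitPlane_ne_zero (ofReal_add_mem_slitPlane hx hw.2)
    exact (hasDerivAt_inv hne).comp_const_add _ _
  exact (hasDerivAt_integral_of_dominated_loc_of_deriv_le hball (Eventually.of_forall hmeas)
    (integrable_inv_ofReal_add hf₀ hf hz) (by simpa [← inv_pow] using! ((hmeas z).pow 2).neg) hbound
    (hf.const_mul _) hderiv).2.differentiableAt.differentiableWithinAt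

lemma integrable_arg_ofReal_add (hf₀ : ∀ᵐ x ∂μ, 0 ≤ f x)
    (hf : Integrable (fun x ↦ (f x + 1)⁻¹) μ) {z : ℂ} (hz : z ∈ slitPlane) :
    Integrable (fun x ↦ ((f x : ℂ) + z).arg) μ := by
  have hinv := integrable_inv_ofReal_add hf₀ hf hz
  refine (hinv.norm.const_mul (π * ‖z‖)).mono' ?_ ?_
  · have := Complex.measurable_arg.comp_aemeasurable hinv.aemeasurable.inv
    simpa [Function.comp_def] using! this.aestronglyMeasurable
  · filter_upwards [hf₀] with x hx
    exact abs_arg_ofReal_add_le hx z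

end IntegralInvAdd

lemma ae_restrict_Ioi_rpow_nonneg (p : ℝ) : ∀ᵐ u ∂volume.restrict (Ioi (0 : ℝ)), 0 ≤ u ^ p := by
  filter_upwards [ae_restrict_mem measurableSet_Ioi] with u hu
  exact rpow_nonneg (le_of_lt hu) p

lemma frequently_nhdsNE_of_eventually_nhds_ofReal {P : ℂ → Prop} {a : ℝ}
    (h : ∀ᶠ x : ℝ in 𝓝 a, P x) : ∃ᶠ z in 𝓝[≠] (a : ℂ), P z := by
  have htendsto : Tendsto ((↑) : ℝ → ℂ) (𝓝[≠] a) (𝓝[≠] (a : ℂ)) :=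
    Complex.continuous_ofReal.continuousAt.continuousWithinAt.tendsto_nhdsWithin
      fun x hx ↦ by simpa using hx
  exact htendsto.frequently (h.filter_mono nhdsWithin_le_nhds).frequently

section InvRpowAdd

variable {p r : ℝ}

lemma integral_exp_neg_rpow_add_mul {t : ℝ} (hp : 0 < p) (ht : 0 < t) :
    ∫ u in Ioi (0 : ℝ), exp (-(u ^ p + r) * t)
      = Gamma (1 / p + 1) * (t ^ (-1 / p) * exp (-(r * t))) := by
  have hsplit (u : ℝ) : exp (-(u ^ p + r) * t) = exp (-(r * t)) * exp (-t * u ^ p) := by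
    rw [← exp_add]
    ring_nf
  simp_rw [hsplit]
  rw [integral_const_mul, integral_exp_neg_mul_rpow hp ht]
  ring

lemma integral_exp_neg_mul_Ioi_zero {a : ℝ} (ha : 0 < a) :
    ∫ t in Ioi (0 : ℝ), exp (-a * t) = a⁻¹ := by
  rw [integral_exp_mul_Ioi (neg_lt_zero.mpr ha), mul_zero, exp_zero, neg_div_neg_eq, one_div]

lemma integrable_prod_exp_neg_rpow_add_mul (hp : 1 < p) (hr : 0 < r) :
    Integrable (fun q : ℝ × ℝ ↦ exp (-(q.1 ^ p + r) * q.2))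
      ((volume.restrict (Ioi 0)).prod (volume.restrict (Ioi 0))) := by
  have hp₀ : 0 < p := one_pos.trans hp
  have hmeas : Measurable fun q : ℝ × ℝ ↦ exp (-(q.1 ^ p + r) * q.2) := by fun_prop
  refine (integrable_prod_iff' hmeas.aestronglyMeasurable).mpr ⟨?_, ?_⟩
  · filter_upwards [ae_restrict_mem measurableSet_Ioi] with t ht
    refine Integrable.of_integral_ne_zero ?_
    rw [integral_exp_neg_rpow_add_mul hp₀ ht]
    have := rpow_pos_of_pos ht (-1 / p)
    positivity
  · have hs : -1 < -1 / p := by rwa [lt_div_iff₀ hp₀, neg_one_mul, neg_lt_neg_iff]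
    have hint : IntegrableOn (fun t : ℝ ↦ t ^ (-1 / p) * exp (-(r * t))) (Ioi 0) := by
      simpa using integrableOn_rpow_mul_exp_neg_mul_rpow hs one_pos hr
    refine IntegrableOn.congr_fun (hint.const_mul (Gamma (1 / p + 1))) (fun t ht ↦ ?_)
      measurableSet_Ioi
    simp only [norm_of_nonneg (exp_pos _).le]
    exact (integral_exp_neg_rpow_add_mul hp₀ ht).symm

lemma integrableOn_inv_rpow_add (hp : 1 < p) (hr : 0 < r) :
    IntegrableOn (fun u : ℝ ↦ (u ^ p + r)⁻¹) (Ioi 0) := by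
  refine IntegrableOn.congr_fun (integrable_prod_exp_neg_rpow_add_mul hp hr).integral_prod_left
    (fun u hu ↦ ?_) measurableSet_Ioi
  have hu_pow := rpow_pos_of_pos hu p
  exact integral_exp_neg_mul_Ioi_zero (add_pos hu_pow hr)

lemma integral_inv_rpow_add (hp : 1 < p) (hr : 0 < r) :
    ∫ u in Ioi (0 : ℝ), (u ^ p + r)⁻¹ = π / p / sin (π / p) * r ^ (1 / p - 1) := by
  have hp₀ : 0 < p := one_pos.trans hp
  have hp_inv : 0 < 1 - 1 / p := sub_pos.mpr ((div_lt_one hp₀).mpr hp)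
  have hr_pow : (1 / r) ^ (1 - 1 / p) = r ^ (1 / p - 1) := by
    rw [one_div r, inv_rpow hr.le, ← rpow_neg hr.le, neg_sub]
  calc ∫ u in Ioi (0 : ℝ), (u ^ p + r)⁻¹
      = ∫ u in Ioi (0 : ℝ), ∫ t in Ioi (0 : ℝ), exp (-(u ^ p + r) * t) := by
        refine setIntegral_congr_fun measurableSet_Ioi fun u hu ↦ ?_
        have hu_pow := rpow_pos_of_pos hu p
        exact (integral_exp_neg_mul_Ioi_zero (add_pos hu_pow hr)).symm
    _ = ∫ t in Ioi (0 : ℝ), ∫ u in Ioi (0 : ℝ), exp (-(u ^ p + r) * t) :=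
        integral_integral_swap (integrable_prod_exp_neg_rpow_add_mul hp hr)
    _ = ∫ t in Ioi (0 : ℝ), Gamma (1 / p + 1) * (t ^ ((1 - 1 / p) - 1) * exp (-(r * t))) := by
        refine setIntegral_congr_fun measurableSet_Ioi fun t ht ↦ ?_
        rw [show 1 - 1 / p - 1 = -1 / p by ring]
        exact integral_exp_neg_rpow_add_mul hp₀ ht
    _ = 1 / p * (Gamma (1 / p) * Gamma (1 - 1 / p)) * r ^ (1 / p - 1) := by
        rw [integral_const_mul, integral_rpow_mul_exp_neg_mul_Ioi hp_inv hr,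
          Gamma_add_one (by positivity), hr_pow]
        ring
    _ = π / p / sin (π / p) * r ^ (1 / p - 1) := by
        rw [Gamma_mul_Gamma_one_sub]
        ring_nf

lemma integral_inv_ofReal_rpow_add (hp : 1 < p) {z : ℂ} (hz : z ∈ slitPlane) :
    ∫ u in Ioi (0 : ℝ), (((u ^ p : ℝ) : ℂ) + z)⁻¹
      = (π / p / sin (π / p) : ℝ) * z ^ ((1 / p - 1 : ℝ) : ℂ) := by
  have hleft : AnalyticOnNhd ℂ
      (fun z : ℂ ↦ ∫ u in Ioi (0 : ℝ), (((u ^ p : ℝ) : ℂ) + z)⁻¹) slitPlane :=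
    (differentiableOn_integral_inv_ofReal_add (ae_restrict_Ioi_rpow_nonneg p)
      (integrableOn_inv_rpow_add hp one_pos)).analyticOnNhd Complex.isOpen_slitPlane
  have hright : AnalyticOnNhd ℂ
      (fun z : ℂ ↦ (π / p / sin (π / p) : ℝ) * z ^ ((1 / p - 1 : ℝ) : ℂ)) slitPlane :=
    DifferentiableOn.analyticOnNhd
      (fun w hw ↦ ((differentiableAt_id.cpow_const hw).const_mul _).differentiableWithinAt)
      Complex.isOpen_slitPlane
  have hreal (r : ℝ) (hr : 0 < r) : ∫ u in Ioi (0 : ℝ), (((u ^ p : ℝ) : ℂ) + r)⁻¹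
      = (π / p / sin (π / p) : ℝ) * (r : ℂ) ^ ((1 / p - 1 : ℝ) : ℂ) := by
    rw [← Complex.ofReal_cpow hr.le, ← Complex.ofReal_mul, ← integral_inv_rpow_add hp hr,
      ← integral_complex_ofReal]
    push_cast
    rfl
  have hpreconn : IsPreconnected slitPlane :=
    (Complex.starConvex_one_slitPlane.isPathConnected
      Complex.one_mem_slitPlane).isConnected.isPreconnected
  exact hleft.eqOn_of_preconnected_of_frequently_eq hright hpreconn
    (by simp : ((1 : ℝ) : ℂ) ∈ slitPlane)
    (frequently_nhdsNE_of_eventually_nhds_ofReal ((lt_mem_nhds one_pos).mono hreal)) hz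

end InvRpowAdd

section Arg

variable {p : ℝ} {z : ℂ}

lemma hasDerivAt_arg_rpow_add {u : ℝ} (hu : 0 < u) (hz : z ∈ slitPlane) :
    HasDerivAt (fun u : ℝ ↦ (((u ^ p : ℝ) : ℂ) + z).arg)
      (((p * u ^ (p - 1) : ℝ) : ℂ) / (((u ^ p : ℝ) : ℂ) + z)).im u := by
  have hbase : HasDerivAt (fun u : ℝ ↦ ((u ^ p : ℝ) : ℂ) + z) ((p * u ^ (p - 1) : ℝ) : ℂ) u :=
    (hasDerivAt_rpow_const (Or.inl hu.ne')).ofReal_comp.add_const z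
  have hlog := hbase.clog_real (ofReal_add_mem_slitPlane (rpow_nonneg hu.le p) hz)
  simpa only [Function.comp_def, Complex.imCLM_apply, Complex.log_im] using
    Complex.imCLM.hasFDerivAt.comp_hasDerivAt u hlog

lemma self_mul_im_deriv_arg_rpow_add {u : ℝ} (hu : 0 < u) (hz : z ∈ slitPlane) :
    u * (((p * u ^ (p - 1) : ℝ) : ℂ) / (((u ^ p : ℝ) : ℂ) + z)).im
      = -p * (z * (((u ^ p : ℝ) : ℂ) + z)⁻¹).im := by
  have hne := Complex.slitPlane_ne_zero (ofReal_add_mem_slitPlane (rpow_nonneg hu.le p) hz)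
  have hu_pow : u * (p * u ^ (p - 1)) = p * u ^ p := by
    rw [rpow_sub_one hu.ne']
    field_simp
  have hsub : ((u ^ p : ℝ) : ℂ) / (((u ^ p : ℝ) : ℂ) + z) = 1 - z * (((u ^ p : ℝ) : ℂ) + z)⁻¹ := by
    field_simp
    ring
  rw [← Complex.im_ofReal_mul, ← mul_div_assoc, ← Complex.ofReal_mul, hu_pow, Complex.ofReal_mul,
    mul_div_assoc, Complex.im_ofReal_mul, hsub, Complex.sub_im, Complex.one_im]
  ring

lemma tendsto_mul_arg_rpow_add_nhdsGT_zero :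
    Tendsto (fun u : ℝ ↦ u * (((u ^ p : ℝ) : ℂ) + z).arg) (𝓝[>] 0) (𝓝 0) :=
  (bdd_le_mul_tendsto_zero' π (Eventually.of_forall fun _ ↦ Complex.abs_arg_le_pi _)
    (tendsto_id.mono_left nhdsWithin_le_nhds)).congr fun u ↦ mul_comm _ u

lemma tendsto_mul_arg_rpow_add_atTop (hp : 1 < p) (hz : z ∈ slitPlane) :
    Tendsto (fun u : ℝ ↦ u * (((u ^ p : ℝ) : ℂ) + z).arg) atTop (𝓝 0) := by
  obtain ⟨C, δ, hC, hδ, hle⟩ := exists_norm_inv_ofReal_add_le hz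
  have hlim : Tendsto (fun u : ℝ ↦ π * ‖z‖ * C * u ^ (-(p - 1))) atTop (𝓝 0) := by
    simpa using (tendsto_rpow_neg_atTop (sub_pos.mpr hp)).const_mul (π * ‖z‖ * C)
  refine squeeze_zero_norm' ?_ hlim
  filter_upwards [eventually_gt_atTop 0] with u hu
  have hu_pow : 0 < u ^ p := rpow_pos_of_pos hu p
  calc ‖u * (((u ^ p : ℝ) : ℂ) + z).arg‖ = u * |(((u ^ p : ℝ) : ℂ) + z).arg| := by
        rw [norm_mul, norm_of_nonneg hu.le, norm_eq_abs]
    _ ≤ u * (π * ‖z‖ * ‖(((u ^ p : ℝ) : ℂ) + z)⁻¹‖) := by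
        gcongr
        exact abs_arg_ofReal_add_le hu_pow.le z
    _ ≤ u * (π * ‖z‖ * (C * (u ^ p + 1)⁻¹)) := by
        gcongr
        exact hle z (Metric.mem_ball_self hδ) _ hu_pow.le
    _ ≤ u * (π * ‖z‖ * (C * (u ^ p)⁻¹)) := by
        gcongr
        linarith
    _ = π * ‖z‖ * C * u ^ (-(p - 1)) := by
        rw [neg_sub, rpow_sub hu, rpow_one]
        ring

lemma integral_arg_rpow_add_eq_mul_im (hp : 1 < p) (hz : z ∈ slitPlane) :
    ∫ u in Ioi (0 : ℝ), (((u ^ p : ℝ) : ℂ) + z).arg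
      = p * (z * ∫ u in Ioi (0 : ℝ), (((u ^ p : ℝ) : ℂ) + z)⁻¹).im := by
  have hnonneg := ae_restrict_Ioi_rpow_nonneg p
  have hint := integrableOn_inv_rpow_add hp one_pos
  have hinv := (integrable_inv_ofReal_add hnonneg hint hz).const_mul z
  have hderiv : EqOn
      (fun u : ℝ ↦ u * (((p * u ^ (p - 1) : ℝ) : ℂ) / (((u ^ p : ℝ) : ℂ) + z)).im)
      (fun u : ℝ ↦ -p * (z * (((u ^ p : ℝ) : ℂ) + z)⁻¹).im) (Ioi 0) :=
    fun u hu ↦ self_mul_im_deriv_arg_rpow_add hu hz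
  have him : ∫ u in Ioi (0 : ℝ), (z * (((u ^ p : ℝ) : ℂ) + z)⁻¹).im
      = (z * ∫ u in Ioi (0 : ℝ), (((u ^ p : ℝ) : ℂ) + z)⁻¹).im :=
    (integral_im hinv).trans (by rw [integral_const_mul]; rfl)
  have hparts := integral_Ioi_mul_deriv_eq_deriv_mul (a := 0) (u := fun u ↦ u) (u' := fun _ ↦ 1)
    (fun u _ ↦ hasDerivAt_id u) (fun u hu ↦ hasDerivAt_arg_rpow_add hu hz)
    ((integrableOn_congr_fun hderiv measurableSet_Ioi).mpr (hinv.im.const_mul (-p)))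
    (by simpa [Pi.mul_def] using! integrable_arg_ofReal_add hnonneg hint hz)
    tendsto_mul_arg_rpow_add_nhdsGT_zero (tendsto_mul_arg_rpow_add_atTop hp hz)
  rw [setIntegral_congr_fun measurableSet_Ioi hderiv, integral_const_mul, him] at hparts
  simp only [one_mul] at hparts
  linarith

lemma integral_arg_rpow_add (hp : 1 < p) (hz : z ∈ slitPlane) :
    ∫ u in Ioi (0 : ℝ), (((u ^ p : ℝ) : ℂ) + z).arg
      = π / sin (π / p) * (z ^ ((1 / p : ℝ) : ℂ)).im := by
  have hp₀ : p ≠ 0 := (one_pos.trans hp).ne'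
  have hz₀ : z ≠ 0 := Complex.slitPlane_ne_zero hz
  have hcpow : z * z ^ ((1 / p - 1 : ℝ) : ℂ) = z ^ ((1 / p : ℝ) : ℂ) := by
    rw [Complex.ofReal_sub, Complex.ofReal_one, Complex.cpow_sub _ _ hz₀, Complex.cpow_one,
      mul_div_cancel₀ _ hz₀]
  rw [integral_arg_rpow_add_eq_mul_im hp hz, integral_inv_ofReal_rpow_add hp hz, mul_left_comm,
    hcpow, Complex.im_ofReal_mul]
  field_simp

end Arg

theorem integral_theta0_eq_bAlpha_general {p φ : ℝ} (hp : 1 < p) (hφ : |φ| ≤ π / 2) :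
    (1 / π) * (∫ u in Ioi (0 : ℝ), arctan (sin φ / (u ^ p + cos φ)))
      = sin (φ / p) / sin (π / p) := by
  obtain ⟨hφ_ge, hφ_le⟩ := abs_le.mp hφ
  set z : ℂ := Complex.cos φ + Complex.sin φ * Complex.I
  have hz_re : z.re = cos φ := by simp [z, Complex.cos_ofReal_re]
  have hz_im : z.im = sin φ := by simp [z, Complex.sin_ofReal_re]
  have hz_norm : ‖z‖ = 1 := Complex.norm_cos_add_sin_mul_I φ
  have hz_arg : z.arg = φ :=
    Complex.arg_cos_add_sin_mul_I ⟨by linarith [pi_pos], by linarith [pi_pos]⟩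
  have hz : z ∈ slitPlane :=
    Complex.mem_slitPlane_iff_arg.mpr ⟨by linarith [pi_pos], by simp [← norm_pos_iff, hz_norm]⟩
  have harg : ∀ u ∈ Ioi (0 : ℝ),
      arctan (sin φ / (u ^ p + cos φ)) = (((u ^ p : ℝ) : ℂ) + z).arg := by
    intro u hu
    have hre : 0 < u ^ p + cos φ :=
      add_pos_of_pos_of_nonneg (rpow_pos_of_pos hu p) (cos_nonneg_of_mem_Icc ⟨hφ_ge, hφ_le⟩)
    rw [arg_eq_arctan_im_div_re] <;> simp [hz_re, hz_im, hre]
  have hz_pow : (z ^ ((1 / p : ℝ) : ℂ)).im = sin (φ / p) := by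
    rw [Complex.cpow_ofReal_im, hz_norm, hz_arg, one_rpow, one_mul, mul_one_div]
  rw [setIntegral_congr_fun measurableSet_Ioi harg, integral_arg_rpow_add hp hz, hz_pow]
  field_simp

/-- `(1/π)·∫₀^∞ arctan( sin((1−α)π/2)/(u^{3−α} + cos((1−α)π/2)) ) du
      = sin((π/(3−α))·((1−α)/2)) / sin(π/(3−α))`. -/
theorem integral_theta0_eq_bAlpha
    (α : ℝ) (hα : α ∈ Set.Ioo (0:ℝ) 1) :
    (1 / π) * (∫ u in Set.Ioi (0:ℝ),
        Real.arctan (Real.sin ((1 - α) * π / 2)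
          / (u ^ (3 - α) + Real.cos ((1 - α) * π / 2))))
      = Real.sin ((π / (3 - α)) * ((1 - α) / 2)) / Real.sin (π / (3 - α)) := by
  have hφ : |(1 - α) * π / 2| ≤ π / 2 :=
    abs_le.mpr (by constructor <;> nlinarith [pi_pos, hα.1, hα.2])
  rw [integral_theta0_eq_bAlpha_general (by linarith [hα.2]) hφ]
  ring_nf
end

section
/- Let α ∈ (0,1), β ∈ ℝ, c_α = (1−α/2)(1−α), and K(x,y) = c_α·∫₀ˣ∫₀ʸ e^{β(x−u)} e^{β(y−v)} |u−v|^{−α} dv du. Suppose λ > 0 and φ : [0,1] → ℝ is continuously differentiable with ∫₀¹ K(x,y)φ(y) dy = λ·φ(x) on [0,1]. Let ψ(x) = e^{−βx}·∫ₓ¹ e^{βr} φ(r) dr, u(x,t) = ∫₀¹ ψ(y)·e^{−t|x−y|} dy for t > 0, Φ₀(z) = −(Γ(α)λ/c_α)·(β−z)·ψ(0) + ∫₀^∞ (t^{α−1}/(t−z))·u(0,t) dt and Φ₁(z) = −(Γ(α)λ/c_α)·ψ'(1) + ∫₀^∞ (t^{α−1}/(t−z))·u(1,t) dt for z ∈ ℂ∖[0,∞),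 and Λ(z) = (Γ(α)λ/c_α)(z²−β²) + ∫₀^∞ 2t^α/(t²−z²) dt for z ∈ ℂ∖ℝ. Then the Laplace transform φ̂(z) = ∫₀¹ e^{−zx} φ(x) dx satisfies, for every z ∈ ℂ∖ℝ with Λ(z) ≠ 0: φ̂(z) = φ̂(−β) − ((z+β)/Λ(z))·( Φ₀(z) + e^{−z}·Φ₁(−z) ). -/
open Real Complex Set intervalIntegral

/-- The fOU covariance kernel for `H = 1 − α/2 > 1/2`,
`K(x,y) = c_α ∫₀ˣ∫₀ʸ e^{β(x−u)} e^{β(y−v)} |u−v|^{−α} dv du`, `c_α = (1−α/2)(1−α)`. -/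
noncomputable def fOUkernelHigh (α β : ℝ) (x y : ℝ) : ℝ :=
  (1 - α / 2) * (1 - α) *
    ∫ u in (0:ℝ)..x, ∫ v in (0:ℝ)..y,
      Real.exp (β * (x - u)) * Real.exp (β * (y - v)) * |u - v| ^ (-α)

/-- `Λ(z) = (Γ(α)λ/c_α)(z²−β²) + ∫₀^∞ 2t^α/(t²−z²) dt`. -/
noncomputable def LambdaFn (α β lam : ℝ) (z : ℂ) : ℂ :=
  ((Real.Gamma α * lam / ((1 - α / 2) * (1 - α)) : ℝ) : ℂ) * (z ^ 2 - (β : ℂ) ^ 2) +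
    ∫ t in Set.Ioi (0:ℝ), 2 * ((t : ℂ) ^ (α : ℂ)) / ((t : ℂ) ^ 2 - z ^ 2)

/-!
Up to the constant `c_α`, the covariance operator factors as `A R A*`, where `A` is the Volterra
operator with kernel `e^{β(x-u)}` on `u ≤ x`, `A*` is its transpose and `R` is the convolution with
`|s|^{-α}`; moreover `ψ = A* φ`. On the Laplace side `A` and `A*` divide by `z - β` and `-(z + β)`
up to boundary terms, so only `R` needs an argument. Since `Γ(α) |s|^{-α}` is the mixture of the
kernels `e^{-t|s|}` with weight `t^{α-1}`, and the convolution with `e^{-t|s|}` is the sum of the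
two Volterra operators with exponent `-t`, the transform of `Γ(α) R ψ` is the transform of `ψ` times
`∫ 2t^α/(t²-z²)` minus the Stieltjes integrals of `u(0,·)` and `u(1,·)`. The eigenvalue equation
then reads `Λ(z) ψ̂(z) = Φ₀(z) + e^{-z} Φ₁(-z)`, and `(z + β) ψ̂(z) = ψ(0) - φ̂(z)` with
`ψ(0) = φ̂(-β)`.
-/

namespace FOU

open MeasureTheory Filter Topology

/-- The Laplace transform of the restriction of `f` to `[a, b]`. -/
noncomputable def laplace (a b : ℝ) (f : ℝ → ℂ) (z : ℂ) : ℂ :=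
  ∫ x in a..b, Complex.exp (-(z * x)) * f x

/-- The Volterra operator with kernel `e^{w(x-u)}`, which solves `y' = w y + f`, `y a = 0`. -/
noncomputable def volterra (a : ℝ) (w : ℂ) (f : ℝ → ℂ) (x : ℝ) : ℂ :=
  ∫ u in a..x, Complex.exp (w * (x - u)) * f u

/-- The transpose of `volterra a w` with respect to the bilinear pairing on `[a, b]`. It maps an
eigenfunction `φ` to the function `ψ` of the paper. -/
noncomputable def volterraAdjoint (b : ℝ) (w : ℂ) (f : ℝ → ℂ) (x : ℝ) : ℂ :=
  ∫ y in x..b, Complex.exp (w * (y - x)) * f y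

/-- The convolution of the kernel `k` with the restriction of `f` to `[a, b]`. -/
noncomputable def intervalConv (a b : ℝ) (k f : ℝ → ℂ) (x : ℝ) : ℂ :=
  ∫ y in a..b, k (x - y) * f y

/-- The singular kernel `|s|^{-α}`; at `s = 0` its value is the junk value of `0 ^ (-α)`. -/
noncomputable def rieszKernel (α s : ℝ) : ℂ := ((|s| ^ (-α) : ℝ) : ℂ)

/-- The kernel `e^{-t|s|}`, whose mixture over `t` with weight `t^{α-1}` is `Γ(α) |s|^{-α}`. -/
noncomputable def expKernel (t s : ℝ) : ℂ := ((Real.exp (-(t * |s|)) : ℝ) : ℂ)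

/-- The Stieltjes (Cauchy) transform of `t^{α-1} g(t)` on the half-line `(0, ∞)`. -/
noncomputable def stieltjes (α : ℝ) (g : ℝ → ℂ) (w : ℂ) : ℂ :=
  ∫ t in Ioi (0 : ℝ), ((t ^ (α - 1) : ℝ) : ℂ) / ((t : ℂ) - w) * g t

theorem integral_primitive_mul {𝕜 : Type*} [RCLike 𝕜] {a b : ℝ} {f g : ℝ → 𝕜} (hab : a ≤ b)
    (hf : IntervalIntegrable f volume a b) (hg : IntervalIntegrable g volume a b) :
    ∫ x in a..b, (∫ u in a..x, f u) * g x = ∫ u in a..b, f u * ∫ x in u..b, g x := by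
  let F : ℝ → ℝ → 𝕜 := fun x u ↦ if u < x then f u * g x else 0
  have hF : Integrable (Function.uncurry F)
      ((volume.restrict (Ioc a b)).prod (volume.restrict (Ioc a b))) := by
    have hfg := (hf.1.mul_prod hg.1).swap.indicator
      (measurableSet_lt measurable_snd measurable_fst : MeasurableSet {p : ℝ × ℝ | p.2 < p.1})
    exact hfg.congr (ae_of_all _ fun p ↦ by simp [F, Function.uncurry, indicator])
  have hx : ∀ x ∈ Ioc a b, ∫ u in Ioc a b, F x u = (∫ u in a..x, f u) * g x := fun x hx ↦ by
    have hFx : F x = (Iio x).indicator fun u ↦ f u * g x := by ext; simp [F, indicator]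
    have hset : Ioc a b ∩ Iio x = Ioo a x := by grind
    rw [hFx, setIntegral_indicator measurableSet_Iio, hset, ← intervalIntegral.integral_mul_const,
      intervalIntegral.integral_of_le hx.1.le, integral_Ioc_eq_integral_Ioo]
  have hu : ∀ u ∈ Ioc a b, ∫ x in Ioc a b, F x u = f u * ∫ x in u..b, g x := fun u hu ↦ by
    have hFu : (F · u) = (Ioi u).indicator fun x ↦ f u * g x := by ext; simp [F, indicator]
    rw [hFu, setIntegral_indicator measurableSet_Ioi, ← intervalIntegral.integral_const_mul,
      intervalIntegral.integral_of_le hu.2, Ioc_inter_Ioi, max_eq_right hu.1.le]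
  rw [intervalIntegral.integral_of_le hab, intervalIntegral.integral_of_le hab,
    ← setIntegral_congr_fun measurableSet_Ioc hx, ← setIntegral_congr_fun measurableSet_Ioc hu,
    integral_integral_swap hF]

theorem mul_integral_exp_mul (a b : ℝ) (s : ℂ) :
    s * ∫ x in a..b, Complex.exp (s * x) = Complex.exp (s * b) - Complex.exp (s * a) := by
  rcases eq_or_ne s 0 with rfl | hs
  · simp
  · rw [integral_exp_mul_complex hs, mul_div_cancel₀ _ hs]

section Laplace

variable {a b : ℝ} {f g : ℝ → ℂ}

theorem laplace_congr (hab : a ≤ b) (h : EqOn f g (Icc a b)) (z : ℂ) :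
    laplace a b f z = laplace a b g z :=
  intervalIntegral.integral_congr fun x hx ↦ by simp [h (uIcc_of_le hab ▸ hx)]

theorem laplace_add (hf : IntervalIntegrable f volume a b) (hg : IntervalIntegrable g volume a b)
    (z : ℂ) : laplace a b (f + g) z = laplace a b f z + laplace a b g z := by
  simp only [laplace, Pi.add_apply, mul_add]
  exact intervalIntegral.integral_add (hf.continuousOn_mul (by fun_prop))
    (hg.continuousOn_mul (by fun_prop))

theorem laplace_const_mul (a b : ℝ) (c : ℂ) (f : ℝ → ℂ) (z : ℂ) :
    laplace a b (fun x ↦ c * f x) z = c * laplace a b f z := by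
  simp only [laplace, mul_left_comm _ c, intervalIntegral.integral_const_mul]

end Laplace

section Volterra

variable {a b : ℝ} {f g : ℝ → ℂ}

theorem volterra_eq_exp_mul (a : ℝ) (w : ℂ) (f : ℝ → ℂ) (x : ℝ) :
    volterra a w f x = Complex.exp (w * x) * ∫ u in a..x, Complex.exp (-w * u) * f u := by
  simp only [volterra, ← intervalIntegral.integral_const_mul, ← mul_assoc, ← Complex.exp_add]
  ring_nf

theorem volterraAdjoint_eq_exp_mul (b : ℝ) (w : ℂ) (f : ℝ → ℂ) (x : ℝ) :
    volterraAdjoint b w f x = Complex.exp (-w * x) * ∫ y in x..b, Complex.exp (w * y) * f y := by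
  simp only [volterraAdjoint, ← intervalIntegral.integral_const_mul, ← mul_assoc, ← Complex.exp_add]
  congr! 4
  ring

theorem intervalIntegrable_exp_mul (s : ℂ) (hf : IntervalIntegrable f volume a b) :
    IntervalIntegrable (fun x : ℝ ↦ Complex.exp (s * x) * f x) volume a b :=
  hf.continuousOn_mul (by fun_prop)

theorem continuousOn_volterra (w : ℂ) (hf : IntervalIntegrable f volume a b) :
    ContinuousOn (volterra a w f) (uIcc a b) := by
  simp only [funext (volterra_eq_exp_mul a w f)]
  exact ContinuousOn.mul (by fun_prop) (intervalIntegral.continuousOn_primitive_interval'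
    (intervalIntegrable_exp_mul (-w) hf) left_mem_uIcc)

theorem continuousOn_volterraAdjoint (w : ℂ) (hf : IntervalIntegrable f volume a b) :
    ContinuousOn (volterraAdjoint b w f) (uIcc a b) := by
  simp only [funext (volterraAdjoint_eq_exp_mul b w f), intervalIntegral.integral_symm b]
  exact ContinuousOn.mul (by fun_prop) (intervalIntegral.continuousOn_primitive_interval'
    (intervalIntegrable_exp_mul w hf) right_mem_uIcc).neg

theorem integral_volterra_mul (hab : a ≤ b) (w : ℂ) (hf : IntervalIntegrable f volume a b)
    (hg : IntervalIntegrable g volume a b) :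
    ∫ x in a..b, volterra a w f x * g x = ∫ y in a..b, f y * volterraAdjoint b w g y := by
  simp only [volterra_eq_exp_mul, volterraAdjoint_eq_exp_mul]
  convert! integral_primitive_mul hab (intervalIntegrable_exp_mul (-w) hf)
    (intervalIntegrable_exp_mul w hg) using 3 <;> ring

theorem mul_volterra_exp (a x : ℝ) (w z : ℂ) :
    (z + w) * volterra a w (fun u ↦ Complex.exp (-(z * u))) x =
      Complex.exp (-(z * a)) * Complex.exp (w * (x - a)) - Complex.exp (-(z * x)) := by
  have h := mul_integral_exp_mul a x (-(z + w))
  simp only [volterra_eq_exp_mul, ← Complex.exp_add]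
  have hu (u : ℝ) : -w * u + -(z * u) = -(z + w) * u := by ring
  simp only [hu]
  rw [show -(z * a) + w * (x - a) = w * x + -(z + w) * a by ring,
    show -(z * x) = w * x + -(z + w) * x by ring, Complex.exp_add, Complex.exp_add]
  linear_combination -Complex.exp (w * x) * h

theorem mul_volterraAdjoint_exp (b x : ℝ) (w z : ℂ) :
    (z - w) * volterraAdjoint b w (fun y ↦ Complex.exp (-(z * y))) x =
      Complex.exp (-(z * x)) - Complex.exp (-(z * b)) * Complex.exp (w * (b - x)) := by
  have h := mul_integral_exp_mul x b (-(z - w))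
  simp only [volterraAdjoint_eq_exp_mul, ← Complex.exp_add]
  have hy (y : ℝ) : w * y + -(z * y) = -(z - w) * y := by ring
  simp only [hy]
  rw [show -(z * b) + w * (b - x) = -w * x + -(z - w) * b by ring,
    show -(z * x) = -w * x + -(z - w) * x by ring, Complex.exp_add, Complex.exp_add]
  linear_combination -Complex.exp (-w * x) * h

theorem laplace_volterra (hab : a ≤ b) (w z : ℂ) (hf : IntervalIntegrable f volume a b) :
    (z - w) * laplace a b (volterra a w f) z =
      laplace a b f z - Complex.exp (-(z * b)) * volterra a w f b := by
  have he : IntervalIntegrable (fun x : ℝ ↦ Complex.exp (-(z * x))) volume a b :=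
    Continuous.intervalIntegrable (by fun_prop) _ _
  calc (z - w) * laplace a b (volterra a w f) z
    _ = (z - w) * ∫ x in a..b, volterra a w f x * Complex.exp (-(z * x)) := by
        simp only [laplace, mul_comm]
    _ = ∫ y in a..b, (Complex.exp (-(z * y)) * f y -
          Complex.exp (-(z * b)) * (Complex.exp (w * (b - y)) * f y)) := by
        rw [integral_volterra_mul hab w hf he, ← intervalIntegral.integral_const_mul]
        refine intervalIntegral.integral_congr fun y _ ↦ ?_
        linear_combination f y * mul_volterraAdjoint_exp b y w z
    _ = laplace a b f z - Complex.exp (-(z * b)) * volterra a w f b := by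
        rw [intervalIntegral.integral_sub (hf.continuousOn_mul (by fun_prop))
          ((hf.continuousOn_mul (by fun_prop)).const_mul _), intervalIntegral.integral_const_mul,
          laplace, volterra]

theorem laplace_volterraAdjoint (hab : a ≤ b) (w z : ℂ) (hf : IntervalIntegrable f volume a b) :
    (z + w) * laplace a b (volterraAdjoint b w f) z =
      Complex.exp (-(z * a)) * volterraAdjoint b w f a - laplace a b f z := by
  have he : IntervalIntegrable (fun x : ℝ ↦ Complex.exp (-(z * x))) volume a b :=
    Continuous.intervalIntegrable (by fun_prop) _ _
  calc (z + w) * laplace a b (volterraAdjoint b w f) z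
    _ = ∫ y in a..b, (Complex.exp (-(z * a)) * (Complex.exp (w * (y - a)) * f y) -
          Complex.exp (-(z * y)) * f y) := by
        rw [laplace, ← integral_volterra_mul hab w he hf, ← intervalIntegral.integral_const_mul]
        refine intervalIntegral.integral_congr fun y _ ↦ ?_
        linear_combination f y * mul_volterra_exp a y w z
    _ = Complex.exp (-(z * a)) * volterraAdjoint b w f a - laplace a b f z := by
        rw [intervalIntegral.integral_sub ((hf.continuousOn_mul (by fun_prop)).const_mul _)
          (hf.continuousOn_mul (by fun_prop)), intervalIntegral.integral_const_mul,
          laplace, volterraAdjoint]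

end Volterra

section IntervalConv

variable {α a b c d : ℝ} {k f g : ℝ → ℂ}

theorem even_rieszKernel (α : ℝ) : (rieszKernel α).Even := fun s ↦ by simp [rieszKernel]

theorem locallyIntegrable_rieszKernel (hα : α < 1) : LocallyIntegrable (rieszKernel α) := by
  refine locallyIntegrable_of_norm_le_rpow (C := 1) (α := α) (by simp) (by simpa using hα)
    (ae_of_all _ fun s ↦ ?_) ?_
  · simp [rieszKernel, abs_of_nonneg (Real.rpow_nonneg (abs_nonneg s) _)]
  · exact (Complex.measurable_ofReal.comp (by fun_prop)).aestronglyMeasurable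

theorem continuous_expKernel (t : ℝ) : Continuous (expKernel t) := by
  unfold expKernel
  fun_prop

theorem integrableOn_sub_mul (hk : LocallyIntegrable k) (hf : IntervalIntegrable f volume c d) :
    IntegrableOn (fun p : ℝ × ℝ ↦ k (p.1 - p.2) * f p.2) (uIcc a b ×ˢ uIcc c d) := by
  let K : Set ℝ := (fun p : ℝ × ℝ ↦ p.1 - p.2) '' (uIcc a b ×ˢ uIcc c d)
  have hK : IsCompact K := (isCompact_uIcc.prod isCompact_uIcc).image (by fun_prop)
  have hkK : Integrable (K.indicator k) :=
    (integrable_indicator_iff hK.measurableSet).2 (hk.integrableOn_isCompact hK)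
  have hfI : Integrable ((uIcc c d).indicator f) :=
    (integrable_indicator_iff measurableSet_uIcc).2 ((intervalIntegrable_iff' (by simp)).1 hf)
  refine ((hfI.convolution_integrand (ContinuousLinearMap.mul ℂ ℂ) hkK).integrableOn
    (s := uIcc a b ×ˢ uIcc c d)).congr_fun (fun p hp ↦ ?_)
    (measurableSet_uIcc.prod measurableSet_uIcc)
  have hpK : p.1 - p.2 ∈ K := mem_image_of_mem _ hp
  simp [hpK, hp.2, mul_comm]

theorem intervalIntegrable_intervalConv (a b : ℝ) (hk : LocallyIntegrable k)
    (hf : IntervalIntegrable f volume c d) :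
    IntervalIntegrable (intervalConv c d k f) volume a b := by
  have h := (integrableOn_sub_mul (a := a) (b := b) hk hf).mono_set
    (Set.prod_mono uIoc_subset_uIcc uIoc_subset_uIcc)
  rw [IntegrableOn, Measure.volume_eq_prod, ← Measure.prod_restrict] at h
  rw [intervalIntegrable_iff]
  exact (h.integral_prod_left.smul (if c ≤ d then 1 else -1 : ℝ)).congr
    (ae_of_all _ fun _ ↦ (intervalIntegral.intervalIntegral_eq_integral_uIoc ..).symm)

theorem integrableOn_sub_mul_mul (hk : LocallyIntegrable k) (hg : ContinuousOn g (uIcc a b))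
    (hf : IntervalIntegrable f volume c d) :
    IntegrableOn (fun p : ℝ × ℝ ↦ k (p.1 - p.2) * (g p.1 * f p.2)) (uIoc a b ×ˢ uIoc c d) := by
  simp only [mul_left_comm (k _)]
  exact ((integrableOn_sub_mul hk hf).continuousOn_mul (hg.comp continuousOn_fst fun _ hp ↦ hp.1)
    (isCompact_uIcc.prod isCompact_uIcc)).mono_set (by gcongr <;> exact uIoc_subset_uIcc)

theorem integral_mul_intervalConv (hk : LocallyIntegrable k) (hk' : k.Even)
    (hg : ContinuousOn g (uIcc a b)) (hf : IntervalIntegrable f volume c d) :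
    ∫ x in a..b, g x * intervalConv c d k f x = ∫ y in c..d, intervalConv a b k g y * f y := by
  simp only [intervalConv, ← intervalIntegral.integral_const_mul,
    ← intervalIntegral.integral_mul_const, mul_left_comm (g _)]
  rw [intervalIntegral_intervalIntegral_swap (F := fun x y ↦ k (x - y) * (g x * f y))
    (integrableOn_sub_mul_mul hk hg hf)]
  refine intervalIntegral.integral_congr fun y _ ↦ intervalIntegral.integral_congr fun x _ ↦ ?_
  simp only [← hk' (x - y), neg_sub, mul_assoc]

end IntervalConv

section KernelFactorization

variable {α b : ℝ} {f : ℝ → ℂ}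

theorem ofReal_fOUkernelHigh (hα : α < 1) (β x y : ℝ) :
    (fOUkernelHigh α β x y : ℂ) = ((1 - α / 2) * (1 - α) : ℝ) *
      volterra 0 β (intervalConv 0 x (rieszKernel α) fun u ↦ Complex.exp (β * (x - u))) y := by
  have h := integral_mul_intervalConv (a := 0) (b := x) (c := 0) (d := y)
    (g := fun u ↦ Complex.exp (β * (x - u))) (f := fun v ↦ Complex.exp (β * (y - v)))
    (locallyIntegrable_rieszKernel hα) (even_rieszKernel α) (by fun_prop)
    (Continuous.intervalIntegrable (by fun_prop) _ _)
  rw [fOUkernelHigh, Complex.ofReal_mul, volterra]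
  simp only [mul_comm (Complex.exp (β * (y - _)))]
  rw [← h]
  simp only [intervalConv, rieszKernel, ← intervalIntegral.integral_const_mul,
    ← intervalIntegral.integral_ofReal]
  push_cast
  congr! 5
  ring

theorem integral_fOUkernelHigh_mul (hα : α < 1) (β : ℝ) (hb : 0 ≤ b)
    (hf : IntervalIntegrable f volume 0 b) (x : ℝ) :
    ∫ y in (0 : ℝ)..b, (fOUkernelHigh α β x y : ℂ) * f y = ((1 - α / 2) * (1 - α) : ℝ) *
      volterra 0 β (intervalConv 0 b (rieszKernel α) (volterraAdjoint b β f)) x := by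
  have hR := locallyIntegrable_rieszKernel hα
  simp only [ofReal_fOUkernelHigh hα, mul_assoc, intervalIntegral.integral_const_mul]
  rw [integral_volterra_mul hb β (intervalIntegrable_intervalConv 0 b hR
    (Continuous.intervalIntegrable (by fun_prop) _ _)) hf,
    ← integral_mul_intervalConv hR (even_rieszKernel α) (by fun_prop)
      (continuousOn_volterraAdjoint β hf).intervalIntegrable, volterra]

end KernelFactorization

section ExpKernel

variable {a b : ℝ} {f : ℝ → ℂ}

theorem intervalConv_expKernel (t : ℝ) (hf : IntervalIntegrable f volume a b) {x : ℝ}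
    (hx : x ∈ Icc a b) :
    intervalConv a b (expKernel t) f x =
      volterra a (-t) f x + volterraAdjoint b (-t) f x := by
  have hi : IntervalIntegrable (fun y ↦ expKernel t (x - y) * f y) volume a b :=
    hf.continuousOn_mul ((continuous_expKernel t).comp (by fun_prop)).continuousOn
  rw [intervalConv, ← intervalIntegral.integral_add_adjacent_intervals
    (hi.mono_set (uIcc_subset_uIcc_left (Icc_subset_uIcc hx)))
    (hi.mono_set (uIcc_subset_uIcc_right (Icc_subset_uIcc hx))), volterra, volterraAdjoint]
  congr 1
  · refine intervalIntegral.integral_congr fun y hy ↦ ?_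
    have hy := (uIcc_of_le hx.1 ▸ hy).2
    simp [expKernel, abs_of_nonneg (sub_nonneg.2 hy)]
  · refine intervalIntegral.integral_congr fun y hy ↦ ?_
    have hy := (uIcc_of_le hx.2 ▸ hy).1
    simp [expKernel, abs_of_nonpos (sub_nonpos.2 hy)]

theorem intervalConv_expKernel_left (t : ℝ) (hab : a ≤ b) (hf : IntervalIntegrable f volume a b) :
    intervalConv a b (expKernel t) f a = volterraAdjoint b (-t) f a := by
  simp [intervalConv_expKernel t hf (left_mem_Icc.2 hab), volterra]

theorem intervalConv_expKernel_right (t : ℝ) (hab : a ≤ b) (hf : IntervalIntegrable f volume a b) :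
    intervalConv a b (expKernel t) f b = volterra a (-t) f b := by
  simp [intervalConv_expKernel t hf (right_mem_Icc.2 hab), volterraAdjoint]

theorem laplace_intervalConv_expKernel (hab : a ≤ b) (hf : IntervalIntegrable f volume a b)
    {t : ℝ} {z : ℂ} (h₁ : (t : ℂ) - z ≠ 0) (h₂ : (t : ℂ) - -z ≠ 0) :
    laplace a b (intervalConv a b (expKernel t) f) z =
      (laplace a b f z - Complex.exp (-(z * a)) * intervalConv a b (expKernel t) f a) / (t - z) +
      (laplace a b f z - Complex.exp (-(z * b)) * intervalConv a b (expKernel t) f b) /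
        (t - -z) := by
  have hadd : laplace a b (intervalConv a b (expKernel t) f) z =
      laplace a b (volterra a (-t) f) z + laplace a b (volterraAdjoint b (-t) f) z := by
    rw [← laplace_add (continuousOn_volterra _ hf).intervalIntegrable
      (continuousOn_volterraAdjoint _ hf).intervalIntegrable]
    exact laplace_congr hab (fun x hx ↦ intervalConv_expKernel t hf hx) z
  have hV := laplace_volterra hab (-t) z hf
  have hA := laplace_volterraAdjoint hab (-t) z hf
  rw [hadd, intervalConv_expKernel_left t hab hf, intervalConv_expKernel_right t hab hf]
  field_simp
  linear_combination (t - z) * hV - (t - -z) * hA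

end ExpKernel

section Gamma

variable {X E : Type*} [MeasurableSpace X] {μ : Measure X} [NormedAddCommGroup E]
  [NormedSpace ℝ E] {α : ℝ} {d : X → ℝ} {f : X → E}

theorem integrableOn_rpow_mul_exp_neg_mul {s : ℝ} (hα : 0 < α) (hs : 0 < s) :
    IntegrableOn (fun t : ℝ ↦ t ^ (α - 1) * Real.exp (-(t * s))) (Ioi 0) := by
  simpa [mul_comm s] using
    integrableOn_rpow_mul_exp_neg_mul_rpow (s := α - 1) (by linarith) one_pos hs

theorem integral_rpow_mul_exp_neg_mul {s : ℝ} (hα : 0 < α) (hs : 0 < s) :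
    ∫ t in Ioi (0 : ℝ), t ^ (α - 1) * Real.exp (-(t * s)) = Real.Gamma α * s ^ (-α) := by
  simp only [mul_comm _ s, Real.integral_rpow_mul_exp_neg_mul_Ioi hα hs, one_div,
    Real.inv_rpow hs.le, Real.rpow_neg hs.le, mul_comm]

theorem integrable_rpow_mul_exp_neg_mul_smul (hα : 0 < α) (hd : Measurable d)
    (hd0 : ∀ᵐ p ∂μ, 0 < d p) (hdf : Integrable (fun p ↦ d p ^ (-α) • f p) μ) :
    Integrable (fun q : X × ℝ ↦ (q.2 ^ (α - 1) * Real.exp (-(q.2 * d q.1))) • f q.1)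
      (μ.prod (volume.restrict (Ioi 0))) := by
  have hf : AEStronglyMeasurable f μ := by
    refine ((hd.pow_const α).aestronglyMeasurable.smul hdf.1).congr ?_
    filter_upwards [hd0] with p hp
    simp [smul_smul, ← Real.rpow_add hp]
  refine (integrable_prod_iff ?_).2 ⟨?_, ?_⟩
  · exact (Measurable.aestronglyMeasurable (by fun_prop)).smul hf.comp_fst
  · filter_upwards [hd0] with p hp
    exact (integrableOn_rpow_mul_exp_neg_mul hα hp).smul_const (f p)
  · refine (hdf.norm.const_mul (Real.Gamma α)).congr ?_
    filter_upwards [hd0] with p hp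
    rw [norm_smul, Real.norm_of_nonneg (by positivity), ← mul_assoc,
      ← integral_rpow_mul_exp_neg_mul hα hp, ← MeasureTheory.integral_mul_const]
    refine setIntegral_congr_fun measurableSet_Ioi fun t (ht : 0 < t) ↦ ?_
    simp only [norm_smul, Real.norm_of_nonneg
      (by positivity : 0 ≤ t ^ (α - 1) * Real.exp (-(t * d p)))]

theorem Gamma_smul_integral_rpow_neg_smul [SFinite μ] [CompleteSpace E] (hα : 0 < α)
    (hd : Measurable d) (hd0 : ∀ᵐ p ∂μ, 0 < d p)
    (hdf : Integrable (fun p ↦ d p ^ (-α) • f p) μ) :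
    Real.Gamma α • ∫ p, d p ^ (-α) • f p ∂μ =
      ∫ t in Ioi (0 : ℝ), t ^ (α - 1) • ∫ p, Real.exp (-(t * d p)) • f p ∂μ := by
  calc Real.Gamma α • ∫ p, d p ^ (-α) • f p ∂μ
    _ = ∫ p, (∫ t in Ioi (0 : ℝ), (t ^ (α - 1) * Real.exp (-(t * d p))) • f p) ∂μ := by
        rw [← MeasureTheory.integral_smul]
        refine integral_congr_ae ?_
        filter_upwards [hd0] with p hp
        rw [_root_.integral_smul_const, integral_rpow_mul_exp_neg_mul hα hp, smul_smul]
    _ = ∫ t in Ioi (0 : ℝ), ∫ p, (t ^ (α - 1) * Real.exp (-(t * d p))) • f p ∂μ :=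
        integral_integral_swap (integrable_rpow_mul_exp_neg_mul_smul hα hd hd0 hdf)
    _ = ∫ t in Ioi (0 : ℝ), t ^ (α - 1) • ∫ p, Real.exp (-(t * d p)) • f p ∂μ := by
        simp only [mul_smul, MeasureTheory.integral_smul]

end Gamma

section Subordination

variable {α a b : ℝ} {k f : ℝ → ℂ}

theorem ae_fst_ne_snd : ∀ᵐ p : ℝ × ℝ, p.1 ≠ p.2 := by
  filter_upwards [(quasiMeasurePreserving_sub volume volume).ae (Measure.ae_ne volume (0 : ℝ))]
    with p hp using sub_ne_zero.1 hp

theorem laplace_intervalConv_eq_setIntegral (hab : a ≤ b) (hk : LocallyIntegrable k)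
    (hf : IntervalIntegrable f volume a b) (z : ℂ) :
    laplace a b (intervalConv a b k f) z =
      ∫ p in Ioc a b ×ˢ Ioc a b, k (p.1 - p.2) * (Complex.exp (-(z * p.1)) * f p.2) := by
  have h := integrableOn_sub_mul_mul (g := fun x : ℝ ↦ Complex.exp (-(z * x))) hk
    (Continuous.continuousOn (by fun_prop) (s := uIcc a b)) hf
  rw [uIoc_of_le hab] at h
  simp only [laplace, intervalConv, intervalIntegral.integral_of_le hab,
    ← MeasureTheory.integral_const_mul, mul_left_comm (Complex.exp _)]
  exact (setIntegral_prod _ h).symm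

theorem Gamma_mul_laplace_intervalConv_rieszKernel (hα : α ∈ Ioo (0 : ℝ) 1) (hab : a ≤ b)
    (hf : IntervalIntegrable f volume a b) (z : ℂ) :
    (Real.Gamma α : ℂ) * laplace a b (intervalConv a b (rieszKernel α) f) z =
      ∫ t in Ioi (0 : ℝ), ((t ^ (α - 1) : ℝ) : ℂ) *
        laplace a b (intervalConv a b (expKernel t) f) z := by
  have hR := locallyIntegrable_rieszKernel hα.2
  have hE (t : ℝ) := (continuous_expKernel t).locallyIntegrable (μ := volume)
  simp only [laplace_intervalConv_eq_setIntegral hab hR hf,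
    laplace_intervalConv_eq_setIntegral hab (hE _) hf]
  refine Gamma_smul_integral_rpow_neg_smul hα.1 (d := fun p : ℝ × ℝ ↦ |p.1 - p.2|)
    (by fun_prop) ?_ ?_
  · filter_upwards [ae_restrict_of_ae ae_fst_ne_snd] with p hp using abs_pos.2 (sub_ne_zero.2 hp)
  · have h := integrableOn_sub_mul_mul (g := fun x : ℝ ↦ Complex.exp (-(z * x))) hR
      (Continuous.continuousOn (by fun_prop) (s := uIcc a b)) hf
    rwa [uIoc_of_le hab] at h

end Subordination

section Stieltjes

open Asymptotics

variable {α a b : ℝ} {f g : ℝ → ℂ} {w z : ℂ}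

theorem ofReal_sub_ne_zero (hz : z.im ≠ 0) (t : ℝ) : (t : ℂ) - z ≠ 0 := fun h ↦
  hz (by simpa using congrArg Complex.im h)

theorem integrableOn_rpow_div_sub (hα : α ∈ Ioo (0 : ℝ) 1)
    (hw : ∀ t : ℝ, 0 ≤ t → (t : ℂ) - w ≠ 0) :
    IntegrableOn (fun t : ℝ ↦ ((t ^ (α - 1) : ℝ) : ℂ) / ((t : ℂ) - w)) (Ioi 0) := by
  have hcont : ContinuousOn (fun t : ℝ ↦ ((t : ℂ) - w)⁻¹) (Ici 0) :=
    ContinuousOn.inv₀ (by fun_prop) hw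
  have htop : (fun t : ℝ ↦ ((t : ℂ) - w)⁻¹) =O[atTop] (· ^ (-(1 : ℝ))) := by
    have hconst : (fun _ : ℝ ↦ w) =o[atTop] fun t : ℝ ↦ (t : ℂ) :=
      isLittleO_const_left.2 (Or.inr (by simpa [Function.comp_def] using tendsto_abs_atTop_atTop))
    refine (IsEquivalent.refl.sub_isLittleO hconst).inv.isBigO.trans (isBigO_of_le _ fun t ↦ ?_)
    simp [Real.rpow_neg_one]
  have hbot : (fun t : ℝ ↦ ((t : ℂ) - w)⁻¹) =O[𝓝[>] 0] (· ^ (-(0 : ℝ))) := by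
    simpa using ((hcont 0 self_mem_Ici).mono Ioi_subset_Ici_self).isBigO_one ℝ
  have h := mellinConvergent_of_isBigO_rpow (s := α)
    ((hcont.mono Ioi_subset_Ici_self).locallyIntegrableOn measurableSet_Ioi) htop
    (by simpa using hα.2) hbot (by simpa using hα.1)
  refine IntegrableOn.congr_fun h (fun t (ht : 0 < t) ↦ ?_) measurableSet_Ioi
  simp [Complex.ofReal_cpow ht.le, div_eq_mul_inv]

theorem integrableOn_rpow_div_sub_mul_const_sub (hα : α ∈ Ioo (0 : ℝ) 1)
    (hw : ∀ t : ℝ, 0 ≤ t → (t : ℂ) - w ≠ 0)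
    (hg : IntegrableOn (fun t : ℝ ↦ ((t ^ (α - 1) : ℝ) : ℂ) / ((t : ℂ) - w) * g t) (Ioi 0))
    (c₁ c₂ : ℂ) :
    IntegrableOn (fun t : ℝ ↦ ((t ^ (α - 1) : ℝ) : ℂ) / ((t : ℂ) - w) * (c₁ - c₂ * g t))
      (Ioi 0) := by
  refine IntegrableOn.congr_fun
    (((integrableOn_rpow_div_sub hα hw).const_mul c₁).sub (hg.const_mul c₂))
    (fun t _ ↦ ?_) measurableSet_Ioi
  simp only [Pi.sub_apply]
  ring

theorem stieltjes_const_sub_const_mul (hα : α ∈ Ioo (0 : ℝ) 1)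
    (hw : ∀ t : ℝ, 0 ≤ t → (t : ℂ) - w ≠ 0)
    (hg : IntegrableOn (fun t : ℝ ↦ ((t ^ (α - 1) : ℝ) : ℂ) / ((t : ℂ) - w) * g t) (Ioi 0))
    (c₁ c₂ : ℂ) :
    stieltjes α (fun t ↦ c₁ - c₂ * g t) w = c₁ * stieltjes α 1 w - c₂ * stieltjes α g w := by
  simp only [stieltjes, Pi.one_apply, mul_one, ← MeasureTheory.integral_const_mul]
  rw [← MeasureTheory.integral_sub ((integrableOn_rpow_div_sub hα hw).const_mul c₁)
    (hg.const_mul c₂)]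
  congr! 2
  ring

theorem integral_two_mul_cpow_div (hα : α ∈ Ioo (0 : ℝ) 1) (hz : z.im ≠ 0) :
    ∫ t in Ioi (0 : ℝ), 2 * (t : ℂ) ^ (α : ℂ) / ((t : ℂ) ^ 2 - z ^ 2) =
      stieltjes α 1 z + stieltjes α 1 (-z) := by
  have h₁ := ofReal_sub_ne_zero hz
  have h₂ := ofReal_sub_ne_zero (z := -z) (by simpa using hz)
  simp only [stieltjes, Pi.one_apply, mul_one]
  rw [← MeasureTheory.integral_add (integrableOn_rpow_div_sub hα fun t _ ↦ h₁ t)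
    (integrableOn_rpow_div_sub hα fun t _ ↦ h₂ t)]
  refine setIntegral_congr_fun measurableSet_Ioi fun t (ht : 0 < t) ↦ ?_
  have ht' : (t : ℂ) ^ (α : ℂ) = ((t ^ (α - 1) : ℝ) : ℂ) * t := by
    rw [← Complex.ofReal_cpow ht.le, ← Complex.ofReal_mul, Real.rpow_sub_one ht.ne',
      div_mul_cancel₀ _ ht.ne']
  have hsq : (t : ℂ) ^ 2 - z ^ 2 = (t - z) * (t - -z) := by ring
  have := h₁ t
  have := h₂ t
  simp only [ht', hsq]
  field_simp
  ring

theorem norm_intervalConv_expKernel_le (hab : a ≤ b) (hf : IntervalIntegrable f volume a b)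
    {t : ℝ} (ht : 0 ≤ t) (x : ℝ) :
    ‖intervalConv a b (expKernel t) f x‖ ≤ ∫ y in a..b, ‖f y‖ := by
  refine intervalIntegral.norm_integral_le_of_norm_le hab (ae_of_all _ fun y _ ↦ ?_) hf.norm
  rw [norm_mul, expKernel, Complex.norm_real, Real.norm_of_nonneg (Real.exp_nonneg _)]
  refine mul_le_of_le_one_left (norm_nonneg _) (Real.exp_le_one_iff.2 ?_)
  simp only [Left.neg_nonpos_iff]
  positivity

theorem aestronglyMeasurable_intervalConv_expKernel (μ : Measure ℝ)
    (hf : IntervalIntegrable f volume a b) (x : ℝ) :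
    AEStronglyMeasurable (fun t ↦ intervalConv a b (expKernel t) f x) μ := by
  have hE : Continuous fun p : ℝ × ℝ ↦ expKernel p.1 (x - p.2) := by
    unfold expKernel
    fun_prop
  have h := (hE.aestronglyMeasurable (μ := μ.prod (volume.restrict (uIoc a b)))).mul
    hf.def'.aestronglyMeasurable.comp_snd
  simp only [intervalConv, intervalIntegral.intervalIntegral_eq_integral_uIoc]
  exact h.integral_prod_right'.const_smul _

theorem integrableOn_rpow_div_sub_mul_intervalConv_expKernel (hα : α ∈ Ioo (0 : ℝ) 1)
    (hw : ∀ t : ℝ, 0 ≤ t → (t : ℂ) - w ≠ 0) (hab : a ≤ b) (hf : IntervalIntegrable f volume a b)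
    (x : ℝ) :
    IntegrableOn (fun t : ℝ ↦ ((t ^ (α - 1) : ℝ) : ℂ) / ((t : ℂ) - w) *
      intervalConv a b (expKernel t) f x) (Ioi 0) :=
  (integrableOn_rpow_div_sub hα hw).mul_bdd (aestronglyMeasurable_intervalConv_expKernel _ hf x)
    (ae_restrict_of_forall_mem measurableSet_Ioi fun _ ht ↦
      norm_intervalConv_expKernel_le hab hf (mem_Ioi.1 ht).le x)

theorem Gamma_mul_laplace_intervalConv_rieszKernel_eq_stieltjes (hα : α ∈ Ioo (0 : ℝ) 1)
    (hab : a ≤ b) (hf : IntervalIntegrable f volume a b) (hz : z.im ≠ 0) :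
    (Real.Gamma α : ℂ) * laplace a b (intervalConv a b (rieszKernel α) f) z =
      laplace a b f z *
          (∫ t in Ioi (0 : ℝ), 2 * (t : ℂ) ^ (α : ℂ) / ((t : ℂ) ^ 2 - z ^ 2)) -
        Complex.exp (-(z * a)) * stieltjes α (fun t ↦ intervalConv a b (expKernel t) f a) z -
        Complex.exp (-(z * b)) * stieltjes α (fun t ↦ intervalConv a b (expKernel t) f b) (-z) := by
  have h₁ := ofReal_sub_ne_zero hz
  have h₂ := ofReal_sub_ne_zero (z := -z) (by simpa using hz)
  have ha := integrableOn_rpow_div_sub_mul_intervalConv_expKernel hα (fun t _ ↦ h₁ t) hab hf a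
  have hb := integrableOn_rpow_div_sub_mul_intervalConv_expKernel hα (fun t _ ↦ h₂ t) hab hf b
  have hsplit : ∫ t in Ioi (0 : ℝ), ((t ^ (α - 1) : ℝ) : ℂ) *
        laplace a b (intervalConv a b (expKernel t) f) z =
      stieltjes α (fun t ↦ laplace a b f z -
        Complex.exp (-(z * a)) * intervalConv a b (expKernel t) f a) z +
      stieltjes α (fun t ↦ laplace a b f z -
        Complex.exp (-(z * b)) * intervalConv a b (expKernel t) f b) (-z) := by
    unfold stieltjes
    rw [← MeasureTheory.integral_add
      (integrableOn_rpow_div_sub_mul_const_sub hα (fun t _ ↦ h₁ t) ha _ _)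
      (integrableOn_rpow_div_sub_mul_const_sub hα (fun t _ ↦ h₂ t) hb _ _)]
    congr! 2 with t
    rw [laplace_intervalConv_expKernel hab hf (h₁ t) (h₂ t)]
    ring
  rw [Gamma_mul_laplace_intervalConv_rieszKernel hα hab hf, hsplit,
    stieltjes_const_sub_const_mul hα (fun t _ ↦ h₁ t) ha,
    stieltjes_const_sub_const_mul hα (fun t _ ↦ h₂ t) hb,
    integral_two_mul_cpow_div hα hz]
  ring

end Stieltjes

section Eigenfunction

variable {α β lam a b : ℝ} {φ : ℝ → ℝ} {f : ℝ → ℂ} {z : ℂ}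

theorem laplace_volterraAdjoint_mul_LambdaFn (hα : α ∈ Ioo (0 : ℝ) 1) (hab : a ≤ b)
    (hf : IntervalIntegrable f volume a b)
    (heig : ∀ x ∈ Icc a b, ((1 - α / 2) * (1 - α) : ℝ) *
      volterra a β (intervalConv a b (rieszKernel α) (volterraAdjoint b β f)) x = lam * f x)
    (hz : z.im ≠ 0) :
    laplace a b (volterraAdjoint b β f) z * LambdaFn α β lam z =
      Complex.exp (-(z * a)) *
        (-((Real.Gamma α * lam / ((1 - α / 2) * (1 - α)) : ℝ) : ℂ) * (β - z) *
            volterraAdjoint b β f a +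
          stieltjes α (fun t ↦ intervalConv a b (expKernel t) (volterraAdjoint b β f) a) z) +
      Complex.exp (-(z * b)) *
        (((Real.Gamma α * lam / ((1 - α / 2) * (1 - α)) : ℝ) : ℂ) * f b +
          stieltjes α (fun t ↦ intervalConv a b (expKernel t) (volterraAdjoint b β f) b) (-z)) := by
  have hψ : IntervalIntegrable (volterraAdjoint b β f) volume a b :=
    (continuousOn_volterraAdjoint β hf).intervalIntegrable
  have hψL := laplace_volterraAdjoint hab β z hf
  have hfL := laplace_volterra hab β z
    (intervalIntegrable_intervalConv a b (locallyIntegrable_rieszKernel hα.2) hψ)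
  have hRL := Gamma_mul_laplace_intervalConv_rieszKernel_eq_stieltjes hα hab hψ hz
  have heigL := laplace_congr hab heig z
  have heigb := heig b (right_mem_Icc.2 hab)
  have hc : (1 - α / 2) * (1 - α) ≠ 0 :=
    (mul_pos (by linarith [hα.2]) (by linarith [hα.2])).ne'
  have hM : ((Real.Gamma α * lam / ((1 - α / 2) * (1 - α)) : ℝ) : ℂ) *
      ((1 - α / 2) * (1 - α) : ℝ) = Real.Gamma α * lam := by
    rw [← Complex.ofReal_mul, div_mul_cancel₀ _ hc, Complex.ofReal_mul]
  rw [laplace_const_mul, laplace_const_mul] at heigL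
  rw [LambdaFn]
  generalize ((Real.Gamma α * lam / ((1 - α / 2) * (1 - α)) : ℝ) : ℂ) = M at hM ⊢
  have hc' := Complex.ofReal_ne_zero.2 hc
  generalize (((1 - α / 2) * (1 - α) : ℝ) : ℂ) = c at hM heigL heigb hc' ⊢
  apply mul_left_cancel₀ hc'
  linear_combination
    (laplace a b (volterraAdjoint b β f) z * (z ^ 2 - β ^ 2) -
      (z - β) * Complex.exp (-(z * a)) * volterraAdjoint b β f a -
      Complex.exp (-(z * b)) * f b) * hM +
    Real.Gamma α * (lam * (z - β) * hψL + (z - β) * heigL + Complex.exp (-(z * b)) * heigb -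
      c * hfL) - c * hRL

theorem laplace_neg_eq_volterraAdjoint (b : ℝ) (w : ℂ) (f : ℝ → ℂ) :
    laplace 0 b f (-w) = volterraAdjoint b w f 0 := by
  simp [laplace, volterraAdjoint]

theorem intervalIntegrable_ofReal (hφ : IntervalIntegrable φ volume a b) :
    IntervalIntegrable (fun x ↦ (φ x : ℂ)) volume a b :=
  ⟨hφ.1.ofReal, hφ.2.ofReal⟩

theorem volterra_intervalConv_eq_of_eigen (hα : α < 1) (hb : 0 ≤ b)
    (hφ : IntervalIntegrable φ volume 0 b)
    (heig : ∀ x ∈ Icc 0 b, ∫ y in (0 : ℝ)..b, fOUkernelHigh α β x y * φ y = lam * φ x) :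
    ∀ x ∈ Icc 0 b, ((1 - α / 2) * (1 - α) : ℝ) * volterra 0 β
      (intervalConv 0 b (rieszKernel α) (volterraAdjoint b β fun y ↦ (φ y : ℂ))) x =
        lam * (φ x : ℂ) := fun x hx ↦ by
  rw [← integral_fOUkernelHigh_mul hα β hb (intervalIntegrable_ofReal hφ), ← Complex.ofReal_mul,
    ← heig x hx, ← intervalIntegral.integral_ofReal]
  simp only [Complex.ofReal_mul]

theorem continuousOn_of_eigen (hα : α < 1) (hb : 0 ≤ b) (hlam : lam ≠ 0)
    (hφ : IntervalIntegrable φ volume 0 b)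
    (heig : ∀ x ∈ Icc 0 b, ∫ y in (0 : ℝ)..b, fOUkernelHigh α β x y * φ y = lam * φ x) :
    ContinuousOn φ (Icc 0 b) := by
  have hψ := continuousOn_volterraAdjoint β (intervalIntegrable_ofReal hφ)
  have hV := continuousOn_volterra β (intervalIntegrable_intervalConv 0 b
    (locallyIntegrable_rieszKernel hα) hψ.intervalIntegrable)
  rw [uIcc_of_le hb] at hV
  refine (Complex.continuous_re.comp_continuousOn
    ((hV.const_mul (((1 - α / 2) * (1 - α) : ℝ) : ℂ)).const_mul (lam : ℂ)⁻¹)).congr fun x hx ↦ ?_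
  rw [Function.comp_apply, volterra_intervalConv_eq_of_eigen hα hb hφ heig x hx,
    inv_mul_cancel_left₀ (Complex.ofReal_ne_zero.2 hlam), Complex.ofReal_re]

theorem derivWithin_exp_mul_integral_right (β : ℝ) (hab : a < b)
    (hφ : IntervalIntegrable φ volume a b) (hφb : ContinuousWithinAt φ (Icc a b) b) :
    derivWithin (fun x ↦ Real.exp (-(β * x)) * ∫ r in x..b, Real.exp (β * r) * φ r) (Icc a b) b =
      -φ b := by
  have hb : b ∈ Icc a b := right_mem_Icc.2 hab.le
  have : Fact (b ∈ Icc a b) := ⟨hb⟩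
  have hi : IntegrableOn (fun r ↦ Real.exp (β * r) * φ r) (Icc a b) := by
    rw [← uIcc_of_le hab.le, ← intervalIntegrable_iff' enorm_ne_top]
    exact hφ.continuousOn_mul (by fun_prop)
  have hexp : HasDerivWithinAt (fun x ↦ Real.exp (-(β * x))) _ (Icc a b) b :=
    (((hasDerivWithinAt_id b _).const_mul β).neg).exp
  have hint : HasDerivWithinAt (fun x ↦ ∫ r in x..b, Real.exp (β * r) * φ r)
      (-(Real.exp (β * b) * φ b)) (Icc a b) b :=
    intervalIntegral.integral_hasDerivWithinAt_left IntervalIntegrable.refl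
      ⟨Icc a b, self_mem_nhdsWithin, hi.aestronglyMeasurable⟩
      (ContinuousWithinAt.mul (by fun_prop) hφb)
  rw [(hexp.fun_mul hint).derivWithin (uniqueDiffOn_Icc hab b hb), intervalIntegral.integral_same,
    mul_zero, zero_add, mul_neg, ← mul_assoc, ← Real.exp_add, neg_add_cancel, Real.exp_zero,
    one_mul]

theorem mul_derivWithin_of_eigen (hα : α < 1) (hb : 0 < b) (hφ : IntervalIntegrable φ volume 0 b)
    (heig : ∀ x ∈ Icc 0 b, ∫ y in (0 : ℝ)..b, fOUkernelHigh α β x y * φ y = lam * φ x) :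
    lam * derivWithin (fun x ↦ Real.exp (-(β * x)) * ∫ r in x..b, Real.exp (β * r) * φ r)
      (Icc 0 b) b = -(lam * φ b) := by
  rcases eq_or_ne lam 0 with rfl | hlam
  · simp
  · rw [derivWithin_exp_mul_integral_right β hb hφ
      (continuousOn_of_eigen hα hb.le hlam hφ heig b (right_mem_Icc.2 hb.le)), mul_neg]

theorem laplace_volterraAdjoint_mul_LambdaFn_of_eigen (hα : α ∈ Ioo (0 : ℝ) 1) (hb : 0 < b)
    (hφ : IntervalIntegrable φ volume 0 b)
    (heig : ∀ x ∈ Icc 0 b, ∫ y in (0 : ℝ)..b, fOUkernelHigh α β x y * φ y = lam * φ x)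
    (hz : z.im ≠ 0) :
    laplace 0 b (volterraAdjoint b β fun x ↦ (φ x : ℂ)) z * LambdaFn α β lam z =
      -((Real.Gamma α * lam / ((1 - α / 2) * (1 - α)) : ℝ) : ℂ) * (β - z) *
          volterraAdjoint b β (fun x ↦ (φ x : ℂ)) 0 +
        stieltjes α (fun t ↦ intervalConv 0 b (expKernel t)
          (volterraAdjoint b β fun x ↦ (φ x : ℂ)) 0) z +
      Complex.exp (-(z * b)) *
        (-((Real.Gamma α * lam / ((1 - α / 2) * (1 - α)) : ℝ) : ℂ) *
            (derivWithin (fun x ↦ Real.exp (-(β * x)) * ∫ r in x..b, Real.exp (β * r) * φ r)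
              (Icc 0 b) b : ℝ) +
          stieltjes α (fun t ↦ intervalConv 0 b (expKernel t)
            (volterraAdjoint b β fun x ↦ (φ x : ℂ)) b) (-z)) := by
  have hderiv : (lam : ℂ) * (derivWithin
      (fun x ↦ Real.exp (-(β * x)) * ∫ r in x..b, Real.exp (β * r) * φ r) (Icc 0 b) b : ℝ) =
        -(lam * φ b) := by
    exact_mod_cast mul_derivWithin_of_eigen hα.2 hb hφ heig
  rw [laplace_volterraAdjoint_mul_LambdaFn hα hb.le (intervalIntegrable_ofReal hφ)
    (volterra_intervalConv_eq_of_eigen hα.2 hb.le hφ heig) hz, Complex.ofReal_zero, mul_zero,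
    neg_zero, Complex.exp_zero, one_mul, mul_div_right_comm, Complex.ofReal_mul]
  linear_combination Complex.exp (-(z * b)) *
    ((Real.Gamma α / ((1 - α / 2) * (1 - α)) : ℝ) : ℂ) * hderiv

theorem ofReal_exp_mul_integral_right (β b : ℝ) (φ : ℝ → ℝ) (x : ℝ) :
    ((Real.exp (-(β * x)) * ∫ r in x..b, Real.exp (β * r) * φ r : ℝ) : ℂ) =
      volterraAdjoint b β (fun r ↦ (φ r : ℂ)) x := by
  rw [volterraAdjoint_eq_exp_mul, Complex.ofReal_mul, ← intervalIntegral.integral_ofReal]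
  simp

theorem ofReal_integral_mul_exp (a b : ℝ) (φ : ℝ → ℝ) (x t : ℝ) :
    ((∫ y in a..b, φ y * Real.exp (-(t * |x - y|)) : ℝ) : ℂ) =
      intervalConv a b (expKernel t) (fun y ↦ (φ y : ℂ)) x := by
  simp [intervalConv, expKernel, ← intervalIntegral.integral_ofReal, mul_comm]

end Eigenfunction

end FOU

open FOU MeasureTheory in
theorem fOU_laplace_transform_representation_general
    (α β lam : ℝ) (hα : α ∈ Ioo (0 : ℝ) 1)
    (φ : ℝ → ℝ) (hφ : IntervalIntegrable φ volume 0 1)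
    (heig : ∀ x ∈ Icc (0 : ℝ) 1,
      (∫ y in (0 : ℝ)..1, fOUkernelHigh α β x y * φ y) = lam * φ x)
    (ψ : ℝ → ℝ)
    (hψ : ∀ x : ℝ, ψ x = Real.exp (-(β * x)) * ∫ r in x..(1 : ℝ), Real.exp (β * r) * φ r)
    (U : ℝ → ℝ → ℝ)
    (hU : ∀ x t : ℝ, U x t = ∫ y in (0 : ℝ)..1, ψ y * Real.exp (-(t * |x - y|)))
    (Φ₀ Φ₁ : ℂ → ℂ)
    (hΦ₀ : ∀ z : ℂ, Φ₀ z =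
      -(((Real.Gamma α * lam / ((1 - α / 2) * (1 - α)) : ℝ) : ℂ)) * ((β : ℂ) - z) * (ψ 0 : ℂ)
        + ∫ t in Ioi (0 : ℝ), ((t ^ (α - 1) : ℝ) : ℂ) / ((t : ℂ) - z) * (U 0 t : ℂ))
    (hΦ₁ : ∀ z : ℂ, Φ₁ z =
      -(((Real.Gamma α * lam / ((1 - α / 2) * (1 - α)) : ℝ) : ℂ))
          * ((derivWithin ψ (Icc (0 : ℝ) 1) 1 : ℝ) : ℂ)
        + ∫ t in Ioi (0 : ℝ), ((t ^ (α - 1) : ℝ) : ℂ) / ((t : ℂ) - z) * (U 1 t : ℂ))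
    (Lap : ℂ → ℂ)
    (hLap : ∀ z : ℂ, Lap z = ∫ x in (0 : ℝ)..1, Complex.exp (-(z * x)) * (φ x : ℂ)) :
    ∀ z : ℂ, z.im ≠ 0 → LambdaFn α β lam z ≠ 0 →
      Lap z = Lap (-(β : ℂ))
        - ((z + (β : ℂ)) / LambdaFn α β lam z) * (Φ₀ z + Complex.exp (-z) * Φ₁ (-z)) := by
  intro z hz hΛ
  let f : ℝ → ℂ := fun x ↦ (φ x : ℂ)
  have hf : IntervalIntegrable f volume 0 1 := intervalIntegrable_ofReal hφ
  have hψf : (fun x ↦ (ψ x : ℂ)) = volterraAdjoint 1 β f := funext fun x ↦ by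
    rw [hψ, ofReal_exp_mul_integral_right]
  have hUf (x t : ℝ) : (U x t : ℂ) = intervalConv 0 1 (expKernel t) (volterraAdjoint 1 β f) x := by
    rw [hU, ofReal_integral_mul_exp, hψf]
  have hLapf : Lap = laplace 0 1 f := funext hLap
  have hΦ : laplace 0 1 (volterraAdjoint 1 β f) z * LambdaFn α β lam z =
      Φ₀ z + Complex.exp (-z) * Φ₁ (-z) := by
    rw [laplace_volterraAdjoint_mul_LambdaFn_of_eigen hα one_pos hφ heig hz, ← funext hψ, hΦ₀, hΦ₁]
    simp only [stieltjes, hUf, ← hψf, Complex.ofReal_one, mul_one, f]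
  have hψL := laplace_volterraAdjoint zero_le_one β z hf
  rw [Complex.ofReal_zero, mul_zero, neg_zero, Complex.exp_zero, one_mul] at hψL
  rw [hLapf, laplace_neg_eq_volterraAdjoint, ← hΦ]
  field_simp
  linear_combination hψL

/-- Representation of the Laplace transform of an eigenfunction of the fOU covariance
operator via the sectionally holomorphic functions `Φ₀`, `Φ₁`. -/
theorem fOU_laplace_transform_representation
    (α β lam : ℝ) (hα : α ∈ Set.Ioo (0:ℝ) 1) (hlam : 0 < lam)
    (φ : ℝ → ℝ) (hφ : ContDiffOn ℝ 1 φ (Icc 0 1))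
    (heig : ∀ x ∈ Icc (0:ℝ) 1,
      (∫ y in (0:ℝ)..1, fOUkernelHigh α β x y * φ y) = lam * φ x)
    (ψ : ℝ → ℝ)
    (hψ : ∀ x : ℝ, ψ x = Real.exp (-(β * x)) * ∫ r in x..(1:ℝ), Real.exp (β * r) * φ r)
    (U : ℝ → ℝ → ℝ)
    (hU : ∀ x t : ℝ, U x t = ∫ y in (0:ℝ)..1, ψ y * Real.exp (-(t * |x - y|)))
    (Φ₀ Φ₁ : ℂ → ℂ)
    (hΦ₀ : ∀ z : ℂ, Φ₀ z =
      -(((Real.Gamma α * lam / ((1 - α / 2) * (1 - α)) : ℝ) : ℂ)) * ((β : ℂ) - z) * (ψ 0 : ℂ)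
        + ∫ t in Set.Ioi (0:ℝ), ((t ^ (α - 1) : ℝ) : ℂ) / ((t : ℂ) - z) * (U 0 t : ℂ))
    (hΦ₁ : ∀ z : ℂ, Φ₁ z =
      -(((Real.Gamma α * lam / ((1 - α / 2) * (1 - α)) : ℝ) : ℂ))
          * ((derivWithin ψ (Set.Icc (0:ℝ) 1) 1 : ℝ) : ℂ)
        + ∫ t in Set.Ioi (0:ℝ), ((t ^ (α - 1) : ℝ) : ℂ) / ((t : ℂ) - z) * (U 1 t : ℂ))
    (Lap : ℂ → ℂ)
    (hLap : ∀ z : ℂ, Lap z = ∫ x in (0:ℝ)..1, Complex.exp (-(z * x)) * (φ x : ℂ)) :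
    ∀ z : ℂ, z.im ≠ 0 → LambdaFn α β lam z ≠ 0 →
      Lap z = Lap (-(β : ℂ))
        - ((z + (β : ℂ)) / LambdaFn α β lam z) * (Φ₀ z + Complex.exp (-z) * Φ₁ (-z)) :=
  fOU_laplace_transform_representation_general α β lam hα φ
    (hφ.continuousOn.intervalIntegrable_of_Icc zero_le_one) heig ψ hψ U hU Φ₀ Φ₁ hΦ₀ hΦ₁ Lap hLap
end
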